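/- Let n ≥ 2 be a natural number, let a₁,…,aₙ be real numbers, let τ̄₁,…,τ̄ₙ ≥ 0 and τᵢ ≥ 0 for a fixed index i, and let c̄ ≤ 0. Set a = Σⱼ aⱼ, q = min{τ̄₁,…,τ̄ₙ, τᵢ}, and Q = max{τ̄₁,…,τ̄ₙ, τᵢ}. Suppose (1) min_j aⱼ − (n/(n+1)) max_j aⱼ > 0, and (2) −((n² − n + 2)/(4(n+1))) · n · q + (n/2 + 1) Q < 0. Then the equilibrium control value uᵢ* = aᵢ − a/(n+1) − ((n² − n + 2)/(4(n+1))) c̄ Σⱼ τ̄ⱼ + (1/2) c̄ ((n/2) τ̄ᵢ + τᵢ) is nonnegative. -/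

import Mathlib

open Finset

/-!
The control is the sum of the emission part `aᵢ − a/(n+1)` and of `−c̄` times the cost part
`κ Σⱼ τ̄ⱼ − ½ (w τ̄ᵢ + τᵢ)`, where `κ = (n²−n+2)/(4(n+1)) ≥ 0` and `w = n/2`. The emission part
is nonnegative because `aᵢ ≥ min a` and `a ≤ n max a`. The cost part is nonnegative because
`κ Σⱼ τ̄ⱼ ≥ κ n q ≥ (w + 1) Q ≥ w τ̄ᵢ + τᵢ`, and `(w + 1) Q ≥ 0` dominates its own half.
-/

section OrderedField

variable {ι 𝕜 : Type*} [Field 𝕜] [LinearOrder 𝕜] [IsStrictOrderedRing 𝕜] {s : Finset ι}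

theorem sum_le_card_mul_sup' (hs : s.Nonempty) (f : ι → 𝕜) :
    ∑ j ∈ s, f j ≤ #s * s.sup' hs f := by
  simpa only [nsmul_eq_mul] using sum_le_card_nsmul s f _ fun _ hj ↦ le_sup' f hj

theorem card_mul_inf'_le_sum (hs : s.Nonempty) (f : ι → 𝕜) :
    #s * s.inf' hs f ≤ ∑ j ∈ s, f j := by
  simpa only [nsmul_eq_mul] using card_nsmul_le_sum s f _ fun _ hj ↦ inf'_le f hj

theorem mul_add_le_add_one_mul_max {w x y z : 𝕜} (hw : 0 ≤ w) (hxy : x ≤ y) :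
    w * x + z ≤ (w + 1) * max y z :=
  calc
    w * x + z ≤ w * max y z + max y z := by
      gcongr
      · exact hxy.trans (le_max_left y z)
      · exact le_max_right y z
    _ = (w + 1) * max y z := by ring

theorem sum_div_card_add_one_le_of_mul_sup'_le_inf' {a : ι → 𝕜} {i : ι} (hs : s.Nonempty)
    (hi : i ∈ s) (ha : (#s : 𝕜) / (#s + 1) * s.sup' hs a ≤ s.inf' hs a) :
    (∑ j ∈ s, a j) / (#s + 1) ≤ a i :=
  calc
    (∑ j ∈ s, a j) / (#s + 1) ≤ (#s * s.sup' hs a) / (#s + 1) := by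
      gcongr
      exact sum_le_card_mul_sup' hs a
    _ = #s / (#s + 1) * s.sup' hs a := (div_mul_eq_mul_div _ _ _).symm
    _ ≤ s.inf' hs a := ha
    _ ≤ a i := inf'_le a hi

theorem half_mul_add_le_mul_sum {τ : ι → 𝕜} {θ κ w : 𝕜} {i : ι} (hs : s.Nonempty) (hi : i ∈ s)
    (hκ : 0 ≤ κ) (hw : 0 ≤ w) (hθ : 0 ≤ θ)
    (hτ : (w + 1) * max (s.sup' hs τ) θ ≤ κ * #s * min (s.inf' hs τ) θ) :
    1 / 2 * (w * τ i + θ) ≤ κ * ∑ j ∈ s, τ j := by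
  have hmax : 0 ≤ (w + 1) * max (s.sup' hs τ) θ :=
    mul_nonneg (by positivity) (hθ.trans (le_max_right _ _))
  calc
    1 / 2 * (w * τ i + θ) ≤ 1 / 2 * ((w + 1) * max (s.sup' hs τ) θ) := by
      gcongr
      exact mul_add_le_add_one_mul_max hw (le_sup' τ hi)
    _ ≤ (w + 1) * max (s.sup' hs τ) θ := by linarith
    _ ≤ κ * #s * min (s.inf' hs τ) θ := hτ
    _ ≤ κ * #s * s.inf' hs τ := by
      gcongr
      exact min_le_left _ _
    _ = κ * (#s * s.inf' hs τ) := mul_assoc _ _ _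
    _ ≤ κ * ∑ j ∈ s, τ j := by
      gcongr
      exact card_mul_inf'_le_sum hs τ

theorem sq_sub_self_add_two_div_nonneg {x : 𝕜} (hx : -1 < x) :
    0 ≤ (x ^ 2 - x + 2) / (4 * (x + 1)) := by
  have hnum : 0 ≤ x ^ 2 - x + 2 := by linarith [sq_nonneg (x - 1)]
  exact div_nonneg hnum (by linarith)

theorem equilibrium_control_nonneg_general {a τ : ι → 𝕜} {θ κ w c : 𝕜} {i : ι}
    (hs : s.Nonempty) (hi : i ∈ s) (hκ : 0 ≤ κ) (hw : 0 ≤ w) (hθ : 0 ≤ θ) (hc : c ≤ 0)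
    (ha : (#s : 𝕜) / (#s + 1) * s.sup' hs a ≤ s.inf' hs a)
    (hτ : (w + 1) * max (s.sup' hs τ) θ ≤ κ * #s * min (s.inf' hs τ) θ) :
    0 ≤ a i - (∑ j ∈ s, a j) / (#s + 1) - κ * c * ∑ j ∈ s, τ j +
      1 / 2 * c * (w * τ i + θ) := by
  have hemission : 0 ≤ a i - (∑ j ∈ s, a j) / (#s + 1) :=
    sub_nonneg.2 (sum_div_card_add_one_le_of_mul_sup'_le_inf' hs hi ha)
  have hcost : 0 ≤ κ * ∑ j ∈ s, τ j - 1 / 2 * (w * τ i + θ) :=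
    sub_nonneg.2 (half_mul_add_le_mul_sum hs hi hκ hw hθ hτ)
  calc
    0 ≤ (a i - (∑ j ∈ s, a j) / (#s + 1)) +
        -c * (κ * ∑ j ∈ s, τ j - 1 / 2 * (w * τ i + θ)) :=
      add_nonneg hemission (mul_nonneg (neg_nonneg.2 hc) hcost)
    _ = _ := by ring

end OrderedField

/-- sufficient conditions for nonnegativity of the equilibrium control.
With `q = min{τ̄₁,…,τ̄ₙ, τᵢ}` and `Q = max{τ̄₁,…,τ̄ₙ, τᵢ}`, if
`min_j aⱼ − (n/(n+1)) max_j aⱼ > 0` and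
`−((n²−n+2)/(4(n+1))) n q + (n/2 + 1) Q < 0`, then for `c̄ ≤ 0` the control
`uᵢ* = aᵢ − a/(n+1) − ((n²−n+2)/(4(n+1))) c̄ Σⱼ τ̄ⱼ + (1/2) c̄ ((n/2) τ̄ᵢ + τᵢ)`
is nonnegative. -/
theorem equilibrium_control_nonneg (n : ℕ) (hn : 2 ≤ n)
    (a τbar : Fin n → ℝ) (i : Fin n) (τᵢ : ℝ)
    (hτbar : ∀ j, 0 ≤ τbar j) (hτᵢ : 0 ≤ τᵢ)
    (cbar : ℝ) (hcbar : cbar ≤ 0)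
    (hne : (univ : Finset (Fin n)).Nonempty)
    (ha : 0 < univ.inf' hne a - ((n : ℝ) / ((n : ℝ) + 1)) * univ.sup' hne a)
    (hτ : -(((n : ℝ) ^ 2 - (n : ℝ) + 2) / (4 * ((n : ℝ) + 1))) * (n : ℝ) *
            (min (univ.inf' hne τbar) τᵢ) +
          ((n : ℝ) / 2 + 1) * (max (univ.sup' hne τbar) τᵢ) < 0) :
    0 ≤ a i - (∑ j, a j) / ((n : ℝ) + 1) -
        (((n : ℝ) ^ 2 - (n : ℝ) + 2) / (4 * ((n : ℝ) + 1))) * cbar * (∑ j, τbar j) +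
        (1 / 2) * cbar * (((n : ℝ) / 2) * τbar i + τᵢ) := by
  have hκ : 0 ≤ ((n : ℝ) ^ 2 - n + 2) / (4 * (n + 1)) :=
    sq_sub_self_add_two_div_nonneg (neg_one_lt_zero.trans_le n.cast_nonneg)
  have hw : 0 ≤ (n : ℝ) / 2 := by positivity
  simpa only [card_fin] using equilibrium_control_nonneg_general hne (mem_univ i) hκ hw hτᵢ hcbar
    (by rw [card_fin]; linarith) (by rw [card_fin]; linarith)
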